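/- Let n < 2k ≤ 2n. Then for every position x of Nim^=_{n,k} and every integer g with 0 ≤ g < T_{n,k}(x), there exists a move x → x' such that T_{n,k}(x') = g. -/

import Mathlib

/-- A move in Exact k-Nim `Nim^=_{n,k}`: all piles weakly decrease and
exactly `k` piles strictly decrease. -/
def ExactMove (n k : ℕ) (x x' : Fin n → ℕ) : Prop :=
  (∀ i, x' i ≤ x i) ∧ (Finset.univ.filter fun i => x' i < x i).card = k

/-- There is a chain of `m` consecutive moves starting at `x`. -/
def HasChain (n k : ℕ) (x : Fin n → ℕ) (m : ℕ) : Prop :=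
  ∃ f : Fin (m + 1) → Fin n → ℕ, f 0 = x ∧
    ∀ i : Fin m, ExactMove n k (f i.castSucc) (f i.succ)

/-- The Tetris function `T_{n,k}(x)`: the maximum number of consecutive moves
that can be made starting from `x`. -/
noncomputable def tetris (n k : ℕ) (x : Fin n → ℕ) : ℕ :=
  sSup {m | HasChain n k x m}

theorem hasChain_zero (n k : ℕ) (x : Fin n → ℕ) : HasChain n k x 0 :=
  ⟨fun _ => x, rfl, fun i => i.elim0⟩

theorem hasChain_succ (n k : ℕ) (x : Fin n → ℕ) (m : ℕ) :
    HasChain n k x (m + 1) ↔ ∃ y, ExactMove n k x y ∧ HasChain n k y m := by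
  constructor
  · rintro ⟨f, h0, h⟩
    refine ⟨f 1, ?_, fun i => f i.succ, rfl, fun i => ?_⟩
    · have := h 0
      simpa [h0] using this
    · have := h i.succ
      simpa using this
  · rintro ⟨y, hy, f, h0, h⟩
    refine ⟨Fin.cons x f, rfl, fun i => ?_⟩
    refine Fin.cases ?_ (fun j => ?_) i
    · simpa [h0] using hy
    · have := h j
      simpa [← Fin.succ_castSucc] using this

theorem hasChain_mono (n k m : ℕ) : ∀ (y z : Fin n → ℕ), (∀ i, y i ≤ z i) →
    HasChain n k y m → HasChain n k z m := by
  induction m with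
  | zero => intro y z _ _; exact hasChain_zero n k z
  | succ m ih =>
    intro y z hyz h
    rw [hasChain_succ] at h ⊢
    obtain ⟨w, ⟨hw, hc⟩, hm⟩ := h
    refine ⟨fun i => if w i < y i then w i else z i, ⟨fun i => ?_, ?_⟩, ih w _ (fun i => ?_) hm⟩
    · have := hw i
      have := hyz i
      dsimp only
      split_ifs <;> omega
    · rw [← hc]
      congr 1
      ext i
      have := hyz i
      simp only [Finset.mem_filter, Finset.mem_univ, true_and]
      split_ifs <;> omega
    · have := hw i
      have := hyz i
      split_ifs <;> omega

theorem hasChain_drop (n k m : ℕ) (j : Fin n) : ∀ (y : Fin n → ℕ),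
    HasChain n k y (m + 1) → HasChain n k (Function.update y j (y j - 1)) m := by
  induction m with
  | zero => intro y _; exact hasChain_zero n k _
  | succ m ih =>
    intro y h
    rw [hasChain_succ] at h
    obtain ⟨w, ⟨hw, hc⟩, hm⟩ := h
    by_cases hj : w j < y j
    · refine hasChain_mono n k (m + 1) w _ (fun i => ?_) hm
      have := hw i
      by_cases hij : i = j
      · subst hij; simp; omega
      · simpa [hij] using this
    · have hjj : w j = y j := le_antisymm (hw j) (not_lt.mp hj)
      rw [hasChain_succ]
      refine ⟨_, ⟨fun i => ?_, ?_⟩, ih w hm⟩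
      · have := hw i
        by_cases hij : i = j
        · subst hij; simp; omega
        · simpa [hij] using this
      · rw [← hc]
        congr 1
        ext i
        by_cases hij : i = j
        · subst hij; simp [hjj]
        · simp [hij]

theorem hasChain_pred (n k m : ℕ) (x : Fin n → ℕ) (h : HasChain n k x (m + 1)) :
    HasChain n k x m := by
  induction m generalizing x with
  | zero => exact hasChain_zero n k x
  | succ m ih =>
    rw [hasChain_succ] at h ⊢
    obtain ⟨w, hw, hm⟩ := h
    exact ⟨w, hw, ih w hm⟩

theorem hasChain_le (n k m m' : ℕ) (x : Fin n → ℕ) (hm : m ≤ m') (h : HasChain n k x m') :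
    HasChain n k x m := by
  induction m', hm using Nat.le_induction with
  | base => exact h
  | succ a _ ih => exact ih (hasChain_pred n k a x h)

theorem exactMove_sum_lt (n k : ℕ) (hk : 0 < k) (x y : Fin n → ℕ) (h : ExactMove n k x y) :
    ∑ i, y i < ∑ i, x i := by
  obtain ⟨h1, h2⟩ := h
  have : 0 < (Finset.univ.filter fun i => y i < x i).card := by omega
  obtain ⟨j, hj⟩ := Finset.card_pos.mp this
  exact Finset.sum_lt_sum (fun i _ => h1 i) ⟨j, Finset.mem_univ j, by simpa using hj⟩

theorem hasChain_bound (n k m : ℕ) (hk : 0 < k) : ∀ (x : Fin n → ℕ),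
    HasChain n k x m → m ≤ ∑ i, x i := by
  induction m with
  | zero => intro x _; exact Nat.zero_le _
  | succ m ih =>
    intro x h
    rw [hasChain_succ] at h
    obtain ⟨w, hw, hm⟩ := h
    have := ih w hm
    have := exactMove_sum_lt n k hk x w hw
    omega

theorem hasChain_tetris (n k : ℕ) (hk : 0 < k) (x : Fin n → ℕ) :
    HasChain n k x (tetris n k x) :=
  Nat.sSup_mem (s := {m | HasChain n k x m}) ⟨0, hasChain_zero n k x⟩
    ⟨∑ i, x i, fun m hm => hasChain_bound n k m hk x hm⟩

theorem le_tetris (n k m : ℕ) (hk : 0 < k) (x : Fin n → ℕ) (h : HasChain n k x m) :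
    m ≤ tetris n k x :=
  le_csSup (s := {m | HasChain n k x m})
    ⟨∑ i, x i, fun m hm => hasChain_bound n k m hk x hm⟩ h

theorem exists_move_aux (n k : ℕ) (hn : n < 2 * k) (x : Fin n → ℕ) (g N : ℕ) :
    ∀ y : Fin n → ℕ, ∑ i, y i ≤ N → ExactMove n k x y → HasChain n k y g →
    ∃ x' : Fin n → ℕ, ExactMove n k x x' ∧ HasChain n k x' g ∧ ¬ HasChain n k x' (g + 1) := by
  induction N with
  | zero =>
    intro y hN hy hg
    refine ⟨y, hy, hg, fun h => ?_⟩
    have := hasChain_bound n k (g + 1) (by omega) y h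
    omega
  | succ N ih =>
    intro y hN hy hg
    by_cases h : HasChain n k y (g + 1)
    swap
    · exact ⟨y, hy, hg, h⟩
    have hex : ∃ j, y j < x j ∧ 0 < y j := by
      by_contra hcon
      push Not at hcon
      obtain ⟨w, ⟨hw, hc⟩, -⟩ := (hasChain_succ n k y g).mp h
      have hd : Disjoint (Finset.univ.filter fun i => y i < x i)
          (Finset.univ.filter fun i => w i < y i) := by
        rw [Finset.disjoint_left]
        intro i hi hi'
        simp only [Finset.mem_filter, Finset.mem_univ, true_and] at hi hi'
        have := hcon i hi
        omega
      have h1 := Finset.card_union_of_disjoint hd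
      have h2 := Finset.card_le_univ ((Finset.univ.filter fun i => y i < x i) ∪
          (Finset.univ.filter fun i => w i < y i))
      rw [h1, hc, hy.2, Fintype.card_fin] at h2
      omega
    obtain ⟨j, hj, hj0⟩ := hex
    refine ih (Function.update y j (y j - 1)) ?_ ⟨fun i => ?_, ?_⟩ (hasChain_drop n k g j y h)
    · have : ∑ i, Function.update y j (y j - 1) i < ∑ i, y i := by
        refine Finset.sum_lt_sum (fun i _ => ?_) ⟨j, Finset.mem_univ j, by simpa using hj0⟩
        by_cases hij : i = j
        · subst hij; simp
        · simp [hij]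
      omega
    · have := hy.1 i
      by_cases hij : i = j
      · subst hij; simp; omega
      · simpa [hij] using this
    · rw [← hy.2]
      congr 1
      ext i
      by_cases hij : i = j
      · subst hij
        simp only [Finset.mem_filter, Finset.mem_univ, true_and, Function.update_self]
        omega
      · simp [hij]

/-- For `n < 2k ≤ 2n`, from every position `x` and for every `g < T_{n,k}(x)` there
is a move `x → x'` with `T_{n,k}(x') = g`. -/
theorem exists_move_tetris_eq (n k : ℕ) (hkn : k ≤ n) (hn : n < 2 * k)
    (x : Fin n → ℕ) (g : ℕ) (hg : g < tetris n k x) :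
    ∃ x' : Fin n → ℕ, ExactMove n k x x' ∧ tetris n k x' = g := by
  have hk : 0 < k := by omega
  have h := hasChain_le n k (g + 1) _ x hg (hasChain_tetris n k hk x)
  obtain ⟨y, hy, hyg⟩ := (hasChain_succ n k x g).mp h
  obtain ⟨z, hz, h1, h2⟩ := exists_move_aux n k hn x g _ y le_rfl hy hyg
  refine ⟨z, hz, le_antisymm ?_ (le_tetris n k g hk z h1)⟩
  by_contra hlt
  exact h2 (hasChain_le n k (g + 1) _ z (by omega) (hasChain_tetris n k hk z))
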